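/- For the harmonizable mixture kernel k_HM with real symmetric positive definite matrices Σ_{1,p}, Σ_{2,p}, and with S_HM(ω, ξ) = ∫∫ k_HM(x, x') exp(−2πi (ω·x − ξ·x')) dx dx' its generalized spectral density, the generalized Fourier inversion formula holds: for all x, x' ∈ ℝ^D, k_HM(x, x') = ∫∫_{ℝ^D×ℝ^D} S_HM(ω, ξ) exp(2πi (ω·x − ξ·x')) dω dξ. In particular k_HM is a harmonizable kernel. -/

import Mathlib

open MeasureTheory Matrix
open scoped BigOperators ComplexOrder

noncomputable section

/-- Euclidean dot product on `ℝ^D`. -/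
def dotR {D : ℕ} (x y : Fin D → ℝ) : ℝ := ∑ d, x d * y d

/-- The harmonizable exponential `exp(2πi (⟨ω, x⟩ - ⟨ξ, x'⟩))`, with `p = (ω, ξ)`. -/
def harmExp {D : ℕ} (p : (Fin D → ℝ) × (Fin D → ℝ)) (x x' : Fin D → ℝ) : ℂ :=
  Complex.exp (2 * (Real.pi : ℂ) * Complex.I * ((dotR p.1 x - dotR p.2 x' : ℝ) : ℂ))

/-- A kernel is harmonizable if it is the generalized inverse Fourier transform of a complex
measure of finite total variation on `ℝ^D × ℝ^D`; the complex measure is encoded by its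
Jordan decomposition into four finite positive measures `μ₁ - μ₂ + i (μ₃ - μ₄)`. -/
def Harmonizable {D : ℕ} (k : (Fin D → ℝ) → (Fin D → ℝ) → ℂ) : Prop :=
  ∃ μ₁ μ₂ μ₃ μ₄ : Measure ((Fin D → ℝ) × (Fin D → ℝ)),
    IsFiniteMeasure μ₁ ∧ IsFiniteMeasure μ₂ ∧ IsFiniteMeasure μ₃ ∧ IsFiniteMeasure μ₄ ∧
    ∀ x x' : Fin D → ℝ,
      k x x' = (∫ p, harmExp p x x' ∂μ₁) - (∫ p, harmExp p x x' ∂μ₂)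
        + Complex.I * ((∫ p, harmExp p x x' ∂μ₃) - (∫ p, harmExp p x x' ∂μ₄))

/-- The locally stationary Gaussian kernel
`k_LSG(u, u') = exp(-2π² ((u+u')/2)ᵀ Σ₁ ((u+u')/2)) · exp(-2π² (u-u')ᵀ Σ₂ (u-u'))`. -/
def kLSG {D : ℕ} (S1 S2 : Matrix (Fin D) (Fin D) ℝ) (u u' : Fin D → ℝ) : ℝ :=
  Real.exp (-(2 * Real.pi ^ 2) * (((u + u') / 2) ⬝ᵥ (S1 *ᵥ ((u + u') / 2)))) *
    Real.exp (-(2 * Real.pi ^ 2) * ((u - u') ⬝ᵥ (S2 *ᵥ (u - u'))))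

/-- The harmonizable mixture kernel.  Products of vectors are Hadamard (elementwise). -/
def kHM {D : ℕ} (P : ℕ) (xc γ : Fin P → Fin D → ℝ) (Q : Fin P → ℕ)
    (μ : (p : Fin P) → Fin (Q p) → Fin D → ℝ)
    (B : (p : Fin P) → Matrix (Fin (Q p)) (Fin (Q p)) ℂ)
    (S1 S2 : Fin P → Matrix (Fin D) (Fin D) ℝ)
    (x x' : Fin D → ℝ) : ℂ :=
  ∑ p, ((kLSG (S1 p) (S2 p) ((x - xc p) * γ p) ((x' - xc p) * γ p) : ℝ) : ℂ) *
    ∑ i, ∑ j,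
      (starRingEnd ℂ)
          (Complex.exp (2 * (Real.pi : ℂ) * Complex.I * ((dotR (μ p i) (x - xc p) : ℝ) : ℂ))) *
        B p i j *
        Complex.exp (2 * (Real.pi : ℂ) * Complex.I * ((dotR (μ p j) (x' - xc p) : ℝ) : ℂ))

open scoped FourierTransform SchwartzMap Polynomial

/-!
A Gaussian `exp(-q)` of a positive definite quadratic form `q` is a Schwartz function, and so are
its translates and modulations; `k_HM` is a finite combination of those, hence a Schwartz function
on `ℝ^D × ℝ^D`. Reflecting the second frequency turns the generalized Fourier transform into the
ordinary one, so the spectral density is Schwartz too and the Fourier inversion formula applies to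
it. In particular the density is integrable, and the positive and negative parts of its real and
imaginary parts are the densities of the four finite measures witnessing harmonizability.
-/

section Schwartz

theorem exists_abs_eval_mul_exp_neg_sq_le (p : ℝ[X]) :
    ∃ C, ∀ x : ℝ, |p.eval x * Real.exp (-(x ^ 2 / 2))| ≤ C := by
  induction p using Polynomial.induction_on' with
  | add p q hp hq =>
    obtain ⟨Cp, hp⟩ := hp
    obtain ⟨Cq, hq⟩ := hq
    refine ⟨Cp + Cq, fun x ↦ ?_⟩
    rw [Polynomial.eval_add, add_mul]
    exact (abs_add_le _ _).trans (add_le_add (hp x) (hq x))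
  | monomial n a =>
    refine ⟨|a| * (n.factorial * Real.exp (1 / 2)), fun x ↦ ?_⟩
    have hpow : |x| ^ n ≤ n.factorial * Real.exp |x| := by
      rw [← div_le_iff₀' (by positivity)]
      exact Real.pow_div_factorial_le_exp _ (abs_nonneg x) n
    calc |(Polynomial.monomial n a).eval x * Real.exp (-(x ^ 2 / 2))|
        = |a| * (|x| ^ n * Real.exp (-(x ^ 2 / 2))) := by
          rw [Polynomial.eval_monomial, abs_mul, abs_mul, abs_pow, Real.abs_exp, mul_assoc]
      _ ≤ |a| * (n.factorial * Real.exp |x| * Real.exp (-(x ^ 2 / 2))) := by gcongr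
      _ = |a| * (n.factorial * Real.exp (|x| - x ^ 2 / 2)) := by
          rw [mul_assoc, ← Real.exp_add, ← sub_eq_add_neg]
      _ ≤ |a| * (n.factorial * Real.exp (1 / 2)) := by
          gcongr
          nlinarith [sq_nonneg (|x| - 1), sq_abs x]

/-- The Gaussian `exp(-x²/2)` as a Schwartz function on `ℝ`. -/
def schwartzGaussian : 𝓢(ℝ, ℝ) where
  toFun x := Real.exp (-(x ^ 2 / 2))
  smooth' := by fun_prop
  decay' k n := by
    obtain ⟨C, hC⟩ := exists_abs_eval_mul_exp_neg_sq_le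
      (Polynomial.X ^ k * (Polynomial.hermite n).map (Int.castRingHom ℝ))
    refine ⟨C, fun x ↦ (hC x).trans_eq' ?_⟩
    rw [norm_iteratedFDeriv_eq_norm_iteratedDeriv, iteratedDeriv_eq_iterate,
      Polynomial.deriv_gaussian_eq_hermite_mul_gaussian]
    simp [Polynomial.aeval_def, Polynomial.eval_map, mul_assoc]

theorem exists_schwartzMap_eq_exp_neg_norm_sq (W : Type*) [NormedAddCommGroup W]
    [InnerProductSpace ℝ W] : ∃ f : 𝓢(W, ℝ), ∀ w, f w = Real.exp (-‖w‖ ^ 2) := by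
  -- `g` dominates the norm but, unlike the norm, is smooth with temperate growth, so that the
  -- one-dimensional Gaussian may be composed with it.
  let g (w : W) : ℝ := √2 * (1 + ‖w‖ ^ 2) ^ (1 / 2 : ℝ)
  have hg_sq (w : W) : g w ^ 2 = 2 * (1 + ‖w‖ ^ 2) := by
    rw [mul_pow, Real.sq_sqrt zero_le_two, ← Real.sqrt_eq_rpow, Real.sq_sqrt (by positivity)]
  have hg : g.HasTemperateGrowth := by
    have := Function.hasTemperateGrowth_one_add_norm_sq_rpow W (1 / 2)
    fun_prop
  have hg_upper (w : W) : ‖w‖ ≤ 1 * (1 + ‖g w‖) ^ 1 := by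
    have : ‖w‖ ≤ |g w| := abs_norm w ▸ sq_le_sq.1 (by nlinarith [hg_sq w])
    simpa using this.trans (le_add_of_nonneg_left zero_le_one)
  refine ⟨Real.exp 1 • SchwartzMap.compCLM ℝ hg ⟨1, 1, hg_upper⟩ schwartzGaussian, fun w ↦ ?_⟩
  change Real.exp 1 * Real.exp (-(g w ^ 2 / 2)) = _
  rw [hg_sq, ← Real.exp_add]
  ring_nf

theorem exists_linearEquiv_eq_norm_sq {V : Type*} [AddCommGroup V] [Module ℝ V]
    [FiniteDimensional ℝ V] {q : QuadraticForm ℝ V} (hq : q.PosDef) :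
    ∃ A : V ≃ₗ[ℝ] EuclideanSpace ℝ (Fin (Module.finrank ℝ V)), ∀ v, q v = ‖A v‖ ^ 2 := by
  obtain ⟨w, hw, ⟨e⟩⟩ := q.equivalent_one_neg_one_weighted_sum_squared
    (QuadraticMap.separatingLeft_of_anisotropic q hq.anisotropic)
  obtain rfl : w = 1 := by
    ext i
    refine (hw i).resolve_left fun hi ↦ ?_
    have hpos : 0 < QuadraticMap.weightedSumSquares ℝ w (Pi.single i 1) := by
      rw [← e.symm.map_app]
      exact hq _ (by simp)
    norm_num [QuadraticMap.weightedSumSquares_apply, Pi.single_apply, hi] at hpos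
  refine ⟨e.toLinearEquiv.trans (WithLp.linearEquiv 2 ℝ _).symm, fun v ↦ ?_⟩
  rw [← e.map_app, QuadraticMap.weightedSumSquares_apply, EuclideanSpace.real_norm_sq_eq]
  simp [sq]

variable {V : Type*} [NormedAddCommGroup V] [NormedSpace ℝ V]

theorem exists_schwartzMap_eq_exp_neg_quadraticForm [FiniteDimensional ℝ V]
    {q : QuadraticForm ℝ V} (hq : q.PosDef) : ∃ f : 𝓢(V, ℝ), ∀ v, f v = Real.exp (-q v) := by
  obtain ⟨A, hA⟩ := exists_linearEquiv_eq_norm_sq hq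
  obtain ⟨f, hf⟩ := exists_schwartzMap_eq_exp_neg_norm_sq
    (EuclideanSpace ℝ (Fin (Module.finrank ℝ V)))
  refine ⟨SchwartzMap.compCLMOfContinuousLinearEquiv ℝ A.toContinuousLinearEquiv f, fun v ↦ ?_⟩
  rw [hA, ← hf]
  rfl

theorem hasTemperateGrowth_exp_mul_I {g : V → ℝ} (hg : g.HasTemperateGrowth) :
    (fun v ↦ Complex.exp (g v * Complex.I)).HasTemperateGrowth := by
  have hderiv (n : ℕ) : iteratedDeriv n (fun t : ℝ ↦ Complex.exp (t * Complex.I)) =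
      fun t : ℝ ↦ Complex.I ^ n * Complex.exp (t * Complex.I) := by
    induction n with
    | zero => simp
    | succ n ih =>
      ext t
      have hline : HasDerivAt (fun t : ℝ ↦ (t : ℂ) * Complex.I) Complex.I t := by
        simpa using (hasDerivAt_id t).ofReal_comp.mul_const Complex.I
      rw [iteratedDeriv_succ, ih, (hline.cexp.const_mul (Complex.I ^ n)).deriv, pow_succ]
      ring
  have hexp : (fun t : ℝ ↦ Complex.exp (t * Complex.I)).HasTemperateGrowth := by
    refine ⟨(Complex.ofRealCLM.contDiff.mul contDiff_const).cexp, fun n ↦ ⟨0, 1, fun t ↦ ?_⟩⟩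
    simp [norm_iteratedFDeriv_eq_norm_iteratedDeriv, hderiv, Complex.norm_exp_ofReal_mul_I]
  exact hexp.comp hg

end Schwartz

section JordanDecomposition

variable {α : Type*} [MeasurableSpace α] {ν : Measure α} {s : α → ℝ}

theorem integral_withDensity_ofReal (hs : AEMeasurable s ν) (g : α → ℂ) :
    ∫ a, g a ∂ν.withDensity (fun a ↦ .ofReal (s a)) = ∫ a, ((max (s a) 0 : ℝ) : ℂ) * g a ∂ν := by
  rw [integral_withDensity_eq_integral_toReal_smul₀ hs.ennreal_ofReal
    (.of_forall fun _ ↦ ENNReal.ofReal_lt_top)]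
  simp [ENNReal.toReal_ofReal']

theorem integrable_max_zero_mul {g : α → ℂ} (hs : AEMeasurable s ν)
    (hsg : Integrable (fun a ↦ s a * g a) ν) :
    Integrable (fun a ↦ ((max (s a) 0 : ℝ) : ℂ) * g a) ν := by
  have hindicator : (fun a ↦ ((max (s a) 0 : ℝ) : ℂ) * g a) =
      {a | 0 ≤ s a}.indicator fun a ↦ s a * g a := by
    ext a
    by_cases ha : 0 ≤ s a
    · simp [ha]
    · simp [ha, le_of_not_ge ha]
  rw [hindicator]
  exact hsg.indicator₀ (nullMeasurableSet_le aemeasurable_const hs)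

theorem exists_isFiniteMeasure_integral_sub_eq (hs : Integrable s ν) : ∃ ν₁ ν₂ : Measure α,
    IsFiniteMeasure ν₁ ∧ IsFiniteMeasure ν₂ ∧ ∀ g : α → ℂ, Integrable (fun a ↦ s a * g a) ν →
      ∫ a, g a ∂ν₁ - ∫ a, g a ∂ν₂ = ∫ a, s a * g a ∂ν := by
  refine ⟨_, _, isFiniteMeasure_withDensity_ofReal hs.2,
    isFiniteMeasure_withDensity_ofReal hs.neg.2, fun g hg ↦ ?_⟩
  have hneg : Integrable (fun a ↦ ((-s) a : ℂ) * g a) ν := by simpa using! hg.neg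
  rw [integral_withDensity_ofReal hs.aemeasurable, integral_withDensity_ofReal hs.neg.aemeasurable,
    ← integral_sub (integrable_max_zero_mul hs.aemeasurable hg)
      (integrable_max_zero_mul hs.neg.aemeasurable hneg)]
  refine integral_congr_ae (.of_forall fun a ↦ ?_)
  simp only [← sub_mul, ← Complex.ofReal_sub]
  exact congrArg (fun r : ℝ ↦ (r : ℂ) * g a) (posPart_sub_negPart (s a))

end JordanDecomposition

section HarmonizableExponential

variable {D : ℕ}

theorem harmExp_eq_exp_mul_I (p : (Fin D → ℝ) × (Fin D → ℝ)) (x x' : Fin D → ℝ) :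
    harmExp p x x' =
      Complex.exp ((2 * Real.pi * (dotR p.1 x - dotR p.2 x') : ℝ) * Complex.I) := by
  rw [harmExp]
  push_cast
  ring_nf

theorem exp_neg_eq_harmExp_neg (ω ξ y y' : Fin D → ℝ) :
    Complex.exp (-(2 * (Real.pi : ℂ) * Complex.I * ((dotR ω y - dotR ξ y' : ℝ) : ℂ))) =
      harmExp (y, y') (-ω) (-ξ) := by
  simp only [harmExp, dotR, Pi.neg_apply, mul_neg, Finset.sum_neg_distrib, mul_comm (ω _),
    mul_comm (ξ _)]
  push_cast
  ring_nf

theorem conj_exp_mul_exp_eq_harmExp_neg (a b x x' : Fin D → ℝ) :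
    starRingEnd ℂ (Complex.exp (2 * (Real.pi : ℂ) * Complex.I * ((dotR a x : ℝ) : ℂ))) *
      Complex.exp (2 * (Real.pi : ℂ) * Complex.I * ((dotR b x' : ℝ) : ℂ)) =
      harmExp (-a, -b) x x' := by
  rw [← Complex.exp_conj, ← Complex.exp_add, harmExp]
  simp only [map_mul, map_ofNat, Complex.conj_ofReal, Complex.conj_I, dotR, Pi.neg_apply, neg_mul,
    Finset.sum_neg_distrib]
  push_cast
  ring_nf

theorem norm_harmExp (p : (Fin D → ℝ) × (Fin D → ℝ)) (x x' : Fin D → ℝ) :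
    ‖harmExp p x x'‖ = 1 := by
  rw [harmExp_eq_exp_mul_I, Complex.norm_exp_ofReal_mul_I]

theorem continuous_harmExp (x x' : Fin D → ℝ) : Continuous fun p ↦ harmExp p x x' := by
  unfold harmExp dotR
  fun_prop

theorem hasTemperateGrowth_harmExp (p : (Fin D → ℝ) × (Fin D → ℝ)) :
    (fun q : (Fin D → ℝ) × (Fin D → ℝ) ↦ harmExp p q.1 q.2).HasTemperateGrowth := by
  simp only [harmExp_eq_exp_mul_I]
  refine hasTemperateGrowth_exp_mul_I ?_
  have hfst (d : Fin D) : (fun q : (Fin D → ℝ) × (Fin D → ℝ) ↦ q.1 d).HasTemperateGrowth := by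
    let L : (Fin D → ℝ) × (Fin D → ℝ) →L[ℝ] ℝ := .proj d ∘L .fst ℝ _ _
    exact L.hasTemperateGrowth
  have hsnd (d : Fin D) : (fun q : (Fin D → ℝ) × (Fin D → ℝ) ↦ q.2 d).HasTemperateGrowth := by
    let L : (Fin D → ℝ) × (Fin D → ℝ) →L[ℝ] ℝ := .proj d ∘L .snd ℝ _ _
    exact L.hasTemperateGrowth
  unfold dotR
  fun_prop

theorem integrable_mul_harmExp {ν : Measure ((Fin D → ℝ) × (Fin D → ℝ))}
    {S : (Fin D → ℝ) × (Fin D → ℝ) → ℂ} (hS : Integrable S ν) (x x' : Fin D → ℝ) :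
    Integrable (fun p ↦ S p * harmExp p x x') ν :=
  hS.mul_bdd (c := 1) (continuous_harmExp x x').aestronglyMeasurable
    (.of_forall fun p ↦ (norm_harmExp p x x').le)

theorem harmonizable_of_integrable_density {k : (Fin D → ℝ) → (Fin D → ℝ) → ℂ}
    {S : (Fin D → ℝ) × (Fin D → ℝ) → ℂ} (hS : Integrable S)
    (hk : ∀ x x', k x x' = ∫ p, S p * harmExp p x x') : Harmonizable k := by
  obtain ⟨μ₁, μ₂, h₁, h₂, hre⟩ := exists_isFiniteMeasure_integral_sub_eq
    (s := fun p ↦ (S p).re) hS.re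
  obtain ⟨μ₃, μ₄, h₃, h₄, him⟩ := exists_isFiniteMeasure_integral_sub_eq
    (s := fun p ↦ (S p).im) hS.im
  refine ⟨μ₁, μ₂, μ₃, μ₄, h₁, h₂, h₃, h₄, fun x x' ↦ ?_⟩
  have hre_int : Integrable fun p ↦ ((S p).re : ℂ) * harmExp p x x' :=
    integrable_mul_harmExp hS.re.ofReal x x'
  have him_int : Integrable fun p ↦ ((S p).im : ℂ) * harmExp p x x' :=
    integrable_mul_harmExp hS.im.ofReal x x'
  rw [hk, hre _ hre_int, him _ him_int, ← integral_const_mul,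
    ← integral_add hre_int (him_int.const_mul _)]
  refine integral_congr_ae (.of_forall fun p ↦ ?_)
  linear_combination (Complex.re_add_im (S p)).symm * harmExp p x x'

end HarmonizableExponential

section Inversion

variable {D : ℕ}

/-- The identification of `ℝ^D × ℝ^D` with a Euclidean space, on which Mathlib's Fourier transform
is defined. -/
def euclideanPair (D : ℕ) : ((Fin D → ℝ) × (Fin D → ℝ)) ≃L[ℝ]
    WithLp 2 (EuclideanSpace ℝ (Fin D) × EuclideanSpace ℝ (Fin D)) :=
  ((EuclideanSpace.equiv (Fin D) ℝ).symm.prodCongr (EuclideanSpace.equiv (Fin D) ℝ).symm).trans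
    (WithLp.prodContinuousLinearEquiv 2 ℝ _ _).symm

/-- The reflection `(ω, ξ) ↦ (ω, -ξ)`. -/
def negSnd (D : ℕ) : ((Fin D → ℝ) × (Fin D → ℝ)) ≃L[ℝ] (Fin D → ℝ) × (Fin D → ℝ) :=
  (ContinuousLinearEquiv.refl ℝ _).prodCongr (ContinuousLinearEquiv.neg ℝ)

-- Instance search does not unfold `volume` on a product to `Measure.prod`.
instance volume_prod_isAddHaarMeasure :
    (volume : Measure ((Fin D → ℝ) × (Fin D → ℝ))).IsAddHaarMeasure :=
  Measure.prod.instIsAddHaarMeasure volume volume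

theorem measurePreserving_euclideanPair (D : ℕ) : MeasurePreserving (euclideanPair D) :=
  (WithLp.volume_preserving_toLp _ _).comp
    ((PiLp.volume_preserving_toLp (Fin D)).prod (PiLp.volume_preserving_toLp (Fin D)))

theorem measurePreserving_negSnd (D : ℕ) : MeasurePreserving (negSnd D) :=
  (MeasurePreserving.id volume).prod (Measure.measurePreserving_neg volume)

theorem inner_euclideanPair_negSnd (x ω : (Fin D → ℝ) × (Fin D → ℝ)) :
    inner ℝ (euclideanPair D x) (euclideanPair D (negSnd D ω)) =
      dotR ω.1 x.1 - dotR ω.2 x.2 := by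
  change inner ℝ (WithLp.toLp 2 x.1) (WithLp.toLp 2 ω.1) +
    inner ℝ (WithLp.toLp 2 x.2) (WithLp.toLp 2 (-ω.2)) = _
  simp [dotR, PiLp.inner_apply, ← sub_eq_add_neg]

/-- The generalized spectral density `S(ω, ξ) = ∫∫ k(x, x') exp(-2πi(⟨ω,x⟩ - ⟨ξ,x'⟩)) dx dx'`
of a kernel. -/
def spectralDensity (k : (Fin D → ℝ) → (Fin D → ℝ) → ℂ) (ω ξ : Fin D → ℝ) : ℂ :=
  ∫ y : Fin D → ℝ, ∫ y' : Fin D → ℝ, k y y' *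
    Complex.exp (-(2 * (Real.pi : ℂ) * Complex.I * ((dotR ω y - dotR ξ y' : ℝ) : ℂ)))

/-- The generalized Fourier transform `f ↦ ∫ f(x, x') exp(-2πi(⟨ω,x⟩ - ⟨ξ,x'⟩)) d(x, x')`: the
Fourier transform on `ℝ^D × ℝ^D` with the second frequency reflected. -/
def generalizedFourier (f : 𝓢((Fin D → ℝ) × (Fin D → ℝ), ℂ)) :
    𝓢((Fin D → ℝ) × (Fin D → ℝ), ℂ) :=
  SchwartzMap.compCLMOfContinuousLinearEquiv ℂ ((negSnd D).trans (euclideanPair D))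
    (𝓕 (SchwartzMap.compCLMOfContinuousLinearEquiv ℂ (euclideanPair D).symm f))

theorem generalizedFourier_apply (f : 𝓢((Fin D → ℝ) × (Fin D → ℝ), ℂ))
    (q : (Fin D → ℝ) × (Fin D → ℝ)) :
    generalizedFourier f q = 𝓕 (f ∘ (euclideanPair D).symm) (euclideanPair D (negSnd D q)) :=
  rfl

theorem spectralDensity_curry (f : 𝓢((Fin D → ℝ) × (Fin D → ℝ), ℂ)) (ω ξ : Fin D → ℝ) :
    spectralDensity (Function.curry f) ω ξ = generalizedFourier f (ω, ξ) := by
  have hint : Integrable fun q ↦ f q * harmExp q (-ω) (-ξ) :=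
    integrable_mul_harmExp f.integrable _ _
  calc spectralDensity (Function.curry f) ω ξ
      = ∫ q, f q * harmExp q (-ω) (-ξ) := by
        simp only [spectralDensity, exp_neg_eq_harmExp_neg, Function.curry_apply]
        exact (integral_prod _ hint).symm
    _ = generalizedFourier f (ω, ξ) := by
        rw [generalizedFourier_apply, Real.fourier_eq',
          ← (measurePreserving_euclideanPair D).integral_comp
            (euclideanPair D).toHomeomorph.measurableEmbedding]
        refine integral_congr_ae (.of_forall fun q ↦ ?_)
        simp only [inner_euclideanPair_negSnd, Function.comp_apply,
          ContinuousLinearEquiv.symm_apply_apply, smul_eq_mul]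
        rw [mul_comm, ← exp_neg_eq_harmExp_neg]
        push_cast
        ring_nf

theorem integral_generalizedFourier_mul_harmExp (f : 𝓢((Fin D → ℝ) × (Fin D → ℝ), ℂ))
    (x x' : Fin D → ℝ) : ∫ p, generalizedFourier f p * harmExp p x x' = f (x, x') := by
  let g := SchwartzMap.compCLMOfContinuousLinearEquiv ℂ (euclideanPair D).symm f
  have hembed := (euclideanPair D).toHomeomorph.measurableEmbedding.comp
    (negSnd D).toHomeomorph.measurableEmbedding
  have hpres := (measurePreserving_euclideanPair D).comp (measurePreserving_negSnd D)
  calc ∫ p, generalizedFourier f p * harmExp p x x'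
      = 𝓕⁻ (𝓕 (g : _ → ℂ)) (euclideanPair D (x, x')) := by
        rw [Real.fourierInv_eq', ← hpres.integral_comp hembed]
        refine integral_congr_ae (.of_forall fun p ↦ ?_)
        simp only [Function.comp_apply, smul_eq_mul]
        rw [real_inner_comm, inner_euclideanPair_negSnd, ← harmExp_eq_exp_mul_I, mul_comm]
        rfl
    _ = g (euclideanPair D (x, x')) := by
        rw [← SchwartzMap.fourier_coe, ← SchwartzMap.fourierInv_coe,
          FourierTransform.fourierInv_fourier_eq]
    _ = f (x, x') := congrArg f ((euclideanPair D).symm_apply_apply _)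

theorem curry_eq_integral_spectralDensity (f : 𝓢((Fin D → ℝ) × (Fin D → ℝ), ℂ))
    (x x' : Fin D → ℝ) : Function.curry f x x' =
      ∫ ω, ∫ ξ, spectralDensity (Function.curry f) ω ξ * harmExp (ω, ξ) x x' := by
  simp only [spectralDensity_curry]
  have hint : Integrable fun p ↦ generalizedFourier f p * harmExp p x x' :=
    integrable_mul_harmExp (generalizedFourier f).integrable x x'
  rw [Function.curry_apply, ← integral_generalizedFourier_mul_harmExp]
  exact integral_prod _ hint

theorem harmonizable_curry (f : 𝓢((Fin D → ℝ) × (Fin D → ℝ), ℂ)) :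
    Harmonizable (Function.curry f) :=
  harmonizable_of_integrable_density (generalizedFourier f).integrable fun x x' ↦
    (integral_generalizedFourier_mul_harmExp f x x').symm

end Inversion

section Kernel

variable {D : ℕ}

theorem posDef_comp {V W : Type*} [AddCommGroup V] [Module ℝ V] [AddCommGroup W] [Module ℝ W]
    {q : QuadraticForm ℝ W} (hq : q.PosDef) {L : V →ₗ[ℝ] W} (hL : Function.Injective L) :
    (q.comp L).PosDef :=
  fun v hv ↦ hq (L v) ((map_ne_zero_iff L hL).2 hv)

/-- The linear map `(u, u') ↦ ((u + u') / 2, u - u')`. -/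
def midpointDiff (D : ℕ) :
    (Fin D → ℝ) × (Fin D → ℝ) →ₗ[ℝ] (Fin D → ℝ) × (Fin D → ℝ) :=
  .prod ((2⁻¹ : ℝ) • (.fst ℝ _ _ + .snd ℝ _ _)) (.fst ℝ _ _ - .snd ℝ _ _)

theorem midpointDiff_apply (q : (Fin D → ℝ) × (Fin D → ℝ)) :
    midpointDiff D q = ((q.1 + q.2) / 2, q.1 - q.2) := by
  ext d
  · simp [midpointDiff, div_eq_inv_mul, mul_add]
  · simp [midpointDiff]

theorem midpointDiff_injective (D : ℕ) : Function.Injective (midpointDiff D) := by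
  refine (injective_iff_map_eq_zero _).2 fun q hq ↦ ?_
  rw [midpointDiff_apply, Prod.mk_eq_zero, sub_eq_zero] at hq
  obtain ⟨hmid, hdiff⟩ := hq
  have hfst : q.1 = 0 := by
    ext d
    simpa [← hdiff] using congrFun hmid d
  exact Prod.ext hfst (hdiff ▸ hfst)

/-- The quadratic form on `ℝ^D × ℝ^D` whose negative is the exponent of `kLSG S1 S2`. -/
def lsgForm (S1 S2 : Matrix (Fin D) (Fin D) ℝ) :
    QuadraticForm ℝ ((Fin D → ℝ) × (Fin D → ℝ)) :=
  (2 * Real.pi ^ 2) • (S1.toQuadraticForm'.prod S2.toQuadraticForm').comp (midpointDiff D)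

theorem kLSG_eq_exp_neg_lsgForm (S1 S2 : Matrix (Fin D) (Fin D) ℝ) (u u' : Fin D → ℝ) :
    kLSG S1 S2 u u' = Real.exp (-lsgForm S1 S2 (u, u')) := by
  simp [kLSG, lsgForm, midpointDiff_apply, toQuadraticForm', toLinearMap₂'_apply', ← Real.exp_add,
    mul_add, add_comm]

theorem posDef_lsgForm {S1 S2 : Matrix (Fin D) (Fin D) ℝ} (hS1 : S1.toQuadraticForm'.PosDef)
    (hS2 : S2.toQuadraticForm'.PosDef) : (lsgForm S1 S2).PosDef :=
  (posDef_comp (hS1.prod hS2) (midpointDiff_injective D)).smul (by positivity)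

theorem exists_schwartzMap_eq_kLSG {S1 S2 : Matrix (Fin D) (Fin D) ℝ}
    (hS1 : S1.toQuadraticForm'.PosDef) (hS2 : S2.toQuadraticForm'.PosDef) {γ : Fin D → ℝ}
    (hγ : ∀ d, γ d ≠ 0) : ∃ f : 𝓢((Fin D → ℝ) × (Fin D → ℝ), ℝ),
      ∀ q, f q = kLSG S1 S2 (q.1 * γ) (q.2 * γ) := by
  have hscale : Function.Injective (LinearMap.mulRight ℝ γ) :=
    (Pi.isUnit_iff.2 fun d ↦ (hγ d).isUnit).mul_left_injective
  obtain ⟨f, hf⟩ := exists_schwartzMap_eq_exp_neg_quadraticForm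
    (posDef_comp (posDef_lsgForm hS1 hS2)
      (L := (LinearMap.mulRight ℝ γ).prodMap (LinearMap.mulRight ℝ γ)) (hscale.prodMap hscale))
  exact ⟨f, fun q ↦ by rw [hf, kLSG_eq_exp_neg_lsgForm]; rfl⟩

theorem exists_schwartzMap_eq_kHM {P : ℕ} (xc : Fin P → Fin D → ℝ) {γ : Fin P → Fin D → ℝ}
    (hγ : ∀ p d, γ p d ≠ 0) {Q : Fin P → ℕ} (μ : (p : Fin P) → Fin (Q p) → Fin D → ℝ)
    (B : (p : Fin P) → Matrix (Fin (Q p)) (Fin (Q p)) ℂ)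
    {S1 S2 : Fin P → Matrix (Fin D) (Fin D) ℝ} (hS1 : ∀ p, (S1 p).toQuadraticForm'.PosDef)
    (hS2 : ∀ p, (S2 p).toQuadraticForm'.PosDef) :
    ∃ f : 𝓢((Fin D → ℝ) × (Fin D → ℝ), ℂ), Function.curry f = kHM P xc γ Q μ B S1 S2 := by
  choose g hg using fun p ↦ exists_schwartzMap_eq_kLSG (hS1 p) (hS2 p) (hγ p)
  refine ⟨∑ p, ∑ i, ∑ j, B p i j • SchwartzMap.compSubConstCLM ℂ (xc p, xc p)
    (SchwartzMap.smulLeftCLM ℂ (fun q ↦ harmExp (-μ p i, -μ p j) q.1 q.2)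
      (SchwartzMap.postcompCLM Complex.ofRealCLM (g p))), ?_⟩
  ext x x'
  simp only [Function.curry_apply, _root_.sum_apply, _root_.smul_apply,
    SchwartzMap.compSubConstCLM_apply,
    SchwartzMap.smulLeftCLM_apply_apply (hasTemperateGrowth_harmExp _),
    SchwartzMap.postcompCLM_apply, hg, kHM, Finset.mul_sum]
  refine Finset.sum_congr rfl fun p _ ↦ Finset.sum_congr rfl fun i _ ↦
    Finset.sum_congr rfl fun j _ ↦ ?_
  rw [mul_right_comm (starRingEnd ℂ _), conj_exp_mul_exp_eq_harmExp_neg]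
  simp only [smul_eq_mul, Complex.ofRealCLM_apply, Prod.fst_sub, Prod.snd_sub]
  ring

theorem kHM_inversion_and_harmonizable_general {P : ℕ} (xc : Fin P → Fin D → ℝ)
    {γ : Fin P → Fin D → ℝ} (hγ : ∀ p d, γ p d ≠ 0) {Q : Fin P → ℕ}
    (μ : (p : Fin P) → Fin (Q p) → Fin D → ℝ)
    (B : (p : Fin P) → Matrix (Fin (Q p)) (Fin (Q p)) ℂ)
    {S1 S2 : Fin P → Matrix (Fin D) (Fin D) ℝ} (hS1 : ∀ p, (S1 p).toQuadraticForm'.PosDef)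
    (hS2 : ∀ p, (S2 p).toQuadraticForm'.PosDef) :
    (∀ x x', kHM P xc γ Q μ B S1 S2 x x' =
      ∫ ω, ∫ ξ, spectralDensity (kHM P xc γ Q μ B S1 S2) ω ξ * harmExp (ω, ξ) x x') ∧
      Harmonizable (kHM P xc γ Q μ B S1 S2) := by
  obtain ⟨f, hf⟩ := exists_schwartzMap_eq_kHM xc hγ μ B hS1 hS2
  rw [← hf]
  exact ⟨curry_eq_integral_spectralDensity f, harmonizable_curry f⟩

end Kernel

/-- Generalized Fourier inversion holds for the harmonizable mixture kernel: with
`S_HM(ω, ξ) = ∫∫ k_HM(x, x') exp(-2πi(⟨ω,x⟩ - ⟨ξ,x'⟩)) dx dx'` its generalized spectral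
density, one has `k_HM(x, x') = ∫∫ S_HM(ω, ξ) exp(2πi(⟨ω,x⟩ - ⟨ξ,x'⟩)) dω dξ`.
In particular `k_HM` is a harmonizable kernel. -/
theorem kHM_inversion_and_harmonizable (D : ℕ) (hD : 0 < D) (P : ℕ) (hP : 0 < P)
    (xc : Fin P → Fin D → ℝ)
    (γ : Fin P → Fin D → ℝ) (hγ : ∀ p d, 0 < γ p d)
    (Q : Fin P → ℕ) (hQ : ∀ p, 0 < Q p)
    (μ : (p : Fin P) → Fin (Q p) → Fin D → ℝ)
    (B : (p : Fin P) → Matrix (Fin (Q p)) (Fin (Q p)) ℂ) (hB : ∀ p, (B p).PosSemidef)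
    (S1 S2 : Fin P → Matrix (Fin D) (Fin D) ℝ)
    (hS1 : ∀ p, (S1 p).PosDef) (hS2 : ∀ p, (S2 p).PosDef) :
    (∀ x x' : Fin D → ℝ,
      kHM P xc γ Q μ B S1 S2 x x'
        = ∫ ω : Fin D → ℝ, ∫ ξ : Fin D → ℝ,
            (∫ y : Fin D → ℝ, ∫ y' : Fin D → ℝ,
              kHM P xc γ Q μ B S1 S2 y y' *
                Complex.exp
                  (-(2 * (Real.pi : ℂ) * Complex.I * ((dotR ω y - dotR ξ y' : ℝ) : ℂ)))) *
              Complex.exp (2 * (Real.pi : ℂ) * Complex.I * ((dotR ω x - dotR ξ x' : ℝ) : ℂ)))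
    ∧ Harmonizable (kHM P xc γ Q μ B S1 S2) :=
  kHM_inversion_and_harmonizable_general xc (fun p d ↦ (hγ p d).ne') μ B
    (fun p ↦ (hS1 p).toQuadraticForm') (fun p ↦ (hS2 p).toQuadraticForm')
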